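/- For every cardinal κ > 2^(2^𝔠), where 𝔠 = 2^{ℵ₀} is the cardinality of the continuum, the spaces B_κ^# and (⊕_κ ℤ/3ℤ)^# are not homeomorphic. -/

import Mathlib

open scoped Pointwise

/-- The Bohr topology on an abelian group `G`: the initial topology induced by the
family of all group homomorphisms from `G` to the circle group `ℝ/ℤ`. -/
noncomputable def bohrTopology (G : Type*) [AddCommGroup G] : TopologicalSpace G :=
  ⨅ χ : G →+ AddCircle (1 : ℝ), TopologicalSpace.induced χ inferInstance

/-!
A Bohr-continuous map `f` from an infinite Boolean group to a vector space over `𝔽_p`, `p ≠ 2`, has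
an infinite fibre. Fix a linearly independent sequence `v` and study
`u h = f (v (h 0) + v (h 1) + v (h 2) + v (h 3)) - f 0` on increasing quadruples `h`. Continuity at
`0` says that every functional `χ` admits a finite colouring of `ℕ` such that `χ (u h) = 0` whenever
the colours of `h` cancel in pairs.

By Hales–Jewett there are, for each number of colours, linear `4`-uniform hypergraphs all of whose
colourings have a monochromatic edge. Hence every `χ` vanishes at some edge of every copy of one of
them, and the Baire category theorem on the dual space gives a single hypergraph along whose copies
`u` is linearly dependent modulo a finite-dimensional subspace. By Ramsey's theorem the dependence
may be taken to be the same for all copies. Two edges share at most one vertex, so moving two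
vertices of one edge separately and together isolates that edge, and all mixed second differences
of `u` vanish modulo the subspace.

If `u ![0, 1, 2, d]` took infinitely many values modulo the subspace, some functional would take
both values `0` and `1` infinitely often on them, on colours `0` and `1`, say. The signed sum
`0000 - 0011 - 0101 + 0110` of `u` over these colour patterns is killed by the functional, but by
the vanishing of mixed differences it is twice a difference in the last coordinate, on which the
functional is not zero. This is impossible in odd characteristic.
-/

theorem exists_strictMono_forall_tail {Q : ℕ → (ℕ → ℕ) → Prop}
    (hsub : ∀ x τ (ρ : ℕ → ℕ), StrictMono ρ → Q x τ → Q x (τ ∘ ρ))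
    (hex : ∀ x (τ : ℕ → ℕ), StrictMono τ → ∃ ρ : ℕ → ℕ, StrictMono ρ ∧ Q x (τ ∘ ρ)) :
    ∃ a : ℕ → ℕ, StrictMono a ∧ ∀ i, Q (a i) (fun j ↦ a (i + 1 + j)) := by
  have hstep (τ : {τ : ℕ → ℕ // StrictMono τ}) :
      ∃ ρ : {ρ : ℕ → ℕ // StrictMono ρ}, 0 < ρ.1 0 ∧ Q (τ.1 0) (τ.1 ∘ ρ.1) := by
    obtain ⟨ρ, hρ, hQ⟩ := hex (τ.1 0) (τ.1 ∘ Nat.succ) (τ.2.comp Order.succ_strictMono)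
    exact ⟨⟨Nat.succ ∘ ρ, Order.succ_strictMono.comp hρ⟩, Nat.succ_pos _, hQ⟩
  choose ρ hpos hQ using hstep
  let t (i : ℕ) : {τ : ℕ → ℕ // StrictMono τ} :=
    Nat.rec ⟨id, strictMono_id⟩ (fun _ τ ↦ ⟨τ.1 ∘ (ρ τ).1, τ.2.comp (ρ τ).2⟩) i
  let a (i : ℕ) : ℕ := (t i).1 0
  have ha : StrictMono a := strictMono_nat_of_lt_succ fun i ↦ (t i).2 (hpos _)
  have hrange (i m : ℕ) : Set.range (t (i + m)).1 ⊆ Set.range (t i).1 := by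
    induction m with
    | zero => rfl
    | succ m ih => exact (Set.range_comp_subset_range (ρ (t (i + m))).1 (t (i + m)).1).trans ih
  refine ⟨a, ha, fun i ↦ ?_⟩
  choose s hs using fun j ↦ hrange (i + 1) j ⟨0, rfl⟩
  have hs_mono : StrictMono s := fun x y hxy ↦ by
    rw [← (t (i + 1)).2.lt_iff_lt, hs, hs]
    exact ha (Nat.add_lt_add_left hxy _)
  have htail : (fun j ↦ a (i + 1 + j)) = ((t i).1 ∘ (ρ (t i)).1) ∘ s :=
    funext fun j ↦ (hs j).symm
  rw [htail]
  exact hsub _ _ s hs_mono (hQ (t i))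

theorem infinite_ramsey {C : Type*} [Finite C] (k : ℕ) (col : (Fin k → ℕ) → C) :
    ∃ σ : ℕ → ℕ, StrictMono σ ∧ ∃ c, ∀ e : Fin k → ℕ, StrictMono e → col (σ ∘ e) = c := by
  induction k with
  | zero => exact ⟨id, strictMono_id, col Fin.elim0, fun e _ ↦ congrArg col (Subsingleton.elim _ _)⟩
  | succ k ih =>
    obtain ⟨a, ha, hcol⟩ := exists_strictMono_forall_tail
      (Q := fun x τ ↦ ∃ c, ∀ e : Fin k → ℕ, StrictMono e → col (Fin.cons x (τ ∘ e)) = c)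
      (fun x τ ρ hρ ⟨c, hc⟩ ↦ ⟨c, fun e he ↦ hc (ρ ∘ e) (hρ.comp he)⟩)
      (fun x τ _ ↦ ih fun e ↦ col (Fin.cons x (τ ∘ e)))
    choose c hc using hcol
    obtain ⟨c₀, hfiber⟩ := Finite.exists_infinite_fiber c
    have hinf : {i | c i = c₀}.Infinite := Set.infinite_coe_iff.1 hfiber
    let ν := Nat.nth (c · = c₀)
    have hν : StrictMono ν := Nat.nth_strictMono hinf
    refine ⟨a ∘ ν, ha.comp hν, c₀, fun e he ↦ ?_⟩
    have hlt (j : Fin k) : ν (e 0) < ν (e j.succ) := hν (he j.succ_pos)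
    have htail : StrictMono fun j : Fin k ↦ ν (e j.succ) - (ν (e 0) + 1) := fun x y hxy ↦ by
      have := hν (he (Fin.succ_lt_succ_iff.2 hxy))
      have := hlt x
      dsimp only
      lia
    calc col ((a ∘ ν) ∘ e)
        = col (Fin.cons (a (ν (e 0))) fun j ↦
            a (ν (e 0) + 1 + (ν (e j.succ) - (ν (e 0) + 1)))) := by
          congr 1
          funext j
          refine Fin.cases rfl (fun j ↦ ?_) j
          simp only [Fin.cons_succ, Function.comp_apply, Nat.add_sub_cancel' (hlt j)]
      _ = c (ν (e 0)) := hc _ _ htail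
      _ = c₀ := Nat.nth_mem_of_infinite hinf _

section Hypergraph

/-- A family of increasing `r`-tuples of vertices, the edges of an `r`-uniform hypergraph on
`Fin M`, which is linear: distinct edges share at most one vertex. -/
structure IsLinearHypergraph {T : Type*} {r M : ℕ} (p : T → Fin r → Fin M) : Prop where
  strictMono (l : T) : StrictMono (p l)
  eq_of_two_common {l l' : T} {i i' s t : Fin r} (hst : s ≠ t) (hs : p l i = p l' s)
    (ht : p l i' = p l' t) : l = l'

open Combinatorics

theorem line_strictMono {α ι : Type*} [PartialOrder α] (l : Line α ι) : StrictMono l := by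
  refine Monotone.strictMono_of_injective (fun x y hxy k ↦ ?_) (fun x y hxy ↦ ?_)
  · cases hk : l.idxFun k <;> simp [hk, hxy]
  · obtain ⟨k, hk⟩ := l.proper
    simpa [hk] using congrFun hxy k

theorem line_eq_of_two_common_points {α ι : Type*} {l l' : Line α ι} {x x' y y' : α}
    (hyy' : y ≠ y') (hy : l x = l' y) (hy' : l x' = l' y') : l = l' := by
  have : Nontrivial α := ⟨y, y', hyy'⟩
  obtain ⟨k, hk⟩ := l'.proper
  have hk₁ := congrFun hy k
  have hk₂ := congrFun hy' k
  obtain ⟨rfl, rfl⟩ : x = y ∧ x' = y' := by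
    cases h : l.idxFun k <;> simp_all
  obtain ⟨f, hf⟩ := l
  obtain ⟨f', hf'⟩ := l'
  congr
  funext k
  have hk₁ := congrFun hy k
  have hk₂ := congrFun hy' k
  cases h : f k <;> cases h' : f' k <;> simp_all

theorem exists_isLinearHypergraph_forall_coloring (r n : ℕ) :
    ∃ (M : ℕ) (T : Type) (_ : Finite T) (p : T → Fin r → Fin M), IsLinearHypergraph p ∧
      ∀ C : Fin M → Fin n, ∃ l c, ∀ i, C (p l i) = c := by
  obtain ⟨ι, _, hmono⟩ := Line.exists_mono_in_high_dimension (Fin r) (Fin n)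
  have : Finite (Line (Fin r) ι) := .of_injective Line.idxFun fun l l' h ↦ by
    cases l; cases l'; congr
  let _ : Fintype (LinearExtension (ι → Fin r)) := Fintype.ofFinite (ι → Fin r)
  let number : LinearExtension (ι → Fin r) ≃o Fin _ :=
    (Fintype.orderIsoFinOfCardEq (LinearExtension (ι → Fin r)) rfl).symm
  have hinj : Function.Injective fun x ↦ number (toLinearExtension x) := number.injective
  have hnumber : StrictMono fun x ↦ number (toLinearExtension x) :=
    (number.monotone.comp toLinearExtension.monotone).strictMono_of_injective hinj
  refine ⟨_, Line (Fin r) ι, this, fun l i ↦ number (toLinearExtension (l i)), ?_, fun C ↦ ?_⟩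
  · exact ⟨fun l ↦ hnumber.comp (line_strictMono l), fun hst hs ht ↦
      line_eq_of_two_common_points hst (hinj hs) (hinj ht)⟩
  · obtain ⟨l, c, hl⟩ := hmono fun x ↦ C (number (toLinearExtension x))
    exact ⟨l, c, hl⟩

end Hypergraph

section LinearAlgebra

theorem injOn_sum_of_linearIndependent {R V : Type*} [Semiring R] [Nontrivial R] [AddCommMonoid V]
    [Module R V] {v : ℕ → V} (hv : LinearIndependent R v) (r : ℕ) :
    Set.InjOn (fun h : Fin r → ℕ ↦ ∑ i, v (h i)) {h | StrictMono h} := by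
  classical
  let indicator (h : Fin r → ℕ) : ℕ →₀ R := ∑ i, Finsupp.single (h i) 1
  have hind (h : Fin r → ℕ) : Finsupp.linearCombination R v (indicator h) = ∑ i, v (h i) := by
    simp [indicator]
  have hmem {h : Fin r → ℕ} (hh : StrictMono h) (a : ℕ) :
      indicator h a = if a ∈ Set.range h then 1 else 0 := by
    simp only [indicator, Finsupp.finsetSum_apply, Finsupp.single_apply]
    split_ifs with ha
    · obtain ⟨i, rfl⟩ := ha
      simp [hh.injective.eq_iff]
    · exact Finset.sum_eq_zero fun i _ ↦ if_neg fun hi ↦ ha ⟨i, hi⟩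
  intro h hh h' hh' heq
  have hindicator : indicator h = indicator h' :=
    hv (by simpa only [hind] using heq)
  refine (StrictMono.range_inj hh hh').1 (Set.ext fun a ↦ ?_)
  have ha := DFunLike.congr_fun hindicator a
  rw [hmem hh, hmem hh'] at ha
  split_ifs at ha <;> simp_all

variable {K W ι : Type*} [Field K] [AddCommGroup W] [Module K W]

theorem exists_dual_apply_eq {v : ι → W} (hv : LinearIndependent K v) (r : ι → K) :
    ∃ χ : Module.Dual K W, ∀ i, χ (v i) = r i := by
  obtain ⟨g, hg⟩ := (Finsupp.linearCombination K v).exists_leftInverse_of_injective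
    (LinearMap.ker_eq_bot.2 hv)
  refine ⟨Finsupp.linearCombination K r ∘ₗ g, fun i ↦ ?_⟩
  have hgi : g (v i) = Finsupp.single i 1 := by
    simpa using LinearMap.congr_fun hg (Finsupp.single i 1)
  simp [hgi]

theorem exists_linearIndependent_comp_of_infinite_range [Finite K] {w : ι → W}
    (hw : (Set.range w).Infinite) : ∃ d : ℕ → ι, LinearIndependent K (w ∘ d) := by
  obtain ⟨b, hb, hspan, hli⟩ := exists_linearIndependent K (Set.range w)
  have hbinf : b.Infinite := fun hfin ↦ by
    have := Module.Finite.span_of_finite K hfin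
    have : Finite (Submodule.span K b) := Module.finite_of_finite K
    exact hw ((Set.toFinite (Submodule.span K b : Set W)).subset
      (hspan ▸ Submodule.subset_span))
  have := hbinf.to_subtype
  let j := Infinite.natEmbedding b
  choose d hd using fun i ↦ hb (j i).2
  exact ⟨d, by simpa only [Function.comp_def, hd] using hli.comp j j.injective⟩

theorem finite_preimage_mkQ [Finite K] (S : Submodule K W) [FiniteDimensional K S]
    {A : Set (W ⧸ S)} (hA : A.Finite) : (S.mkQ ⁻¹' A).Finite := by
  have : Finite S := Module.finite_of_finite K
  have := hA.to_subtype
  exact Set.finite_coe_iff.1 <|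
    .of_equiv (S × A) (QuotientAddGroup.preimageMkEquivAddSubgroupProdSet S.toAddSubgroup A).symm

-- Baire category in the compact space of functionals, given by their values on a basis of `W`: a
-- basic open set of functionals prescribes the values on a finite-dimensional `S` only.
theorem exists_finiteDimensional_forall_not_linearIndependent [Finite K]
    [Countable ι] {E T : ι → Type*} [∀ n, Finite (T n)] (w : ∀ n, E n → T n → W)
    (hw : ∀ χ : Module.Dual K W, ∃ n, ∀ e, ∃ l, χ (w n e l) = 0) :
    ∃ (n : ι) (S : Submodule K W), FiniteDimensional K S ∧
      ∀ e, ¬ LinearIndependent K fun l ↦ S.mkQ (w n e l) := by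
  classical
  let _ : TopologicalSpace K := ⊥
  have : DiscreteTopology K := ⟨rfl⟩
  let b := Module.Basis.ofVectorSpace K W
  let Z (n : ι) : Set (Module.Basis.ofVectorSpaceIndex K W → K) :=
    {c | ∀ e, ∃ l, b.constr K c (w n e l) = 0}
  have hclosed (n : ι) : IsClosed (Z n) := by
    have hZ : Z n = ⋂ e, ⋃ l, {c | b.constr K c (w n e l) = 0} := by ext; simp [Z]
    rw [hZ]
    refine isClosed_iInter fun e ↦ isClosed_iUnion_of_finite fun l ↦
      isClosed_eq ?_ continuous_const
    simp only [Module.Basis.constr_apply, Finsupp.sum]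
    fun_prop
  have hcover : ⋃ n, Z n = Set.univ := Set.eq_univ_of_forall fun c ↦
    Set.mem_iUnion.2 (hw (b.constr K c))
  obtain ⟨n, c₀, hc₀⟩ := nonempty_interior_of_iUnion_of_closed hclosed hcover
  obtain ⟨I, U, hU, hsub⟩ := isOpen_pi_iff.1 isOpen_interior c₀ hc₀
  have hZ {c} (hc : ∀ i ∈ I, c i = c₀ i) : c ∈ Z n :=
    interior_subset (hsub fun i hi ↦ hc i hi ▸ (hU i hi).2)
  let S := Submodule.span K (b '' I)
  refine ⟨n, S, .span_of_finite K (I.finite_toSet.image b), fun e hli ↦ ?_⟩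
  obtain ⟨χ, hχ⟩ := exists_dual_apply_eq hli fun l ↦ 1 - b.constr K c₀ (w n e l)
  have hconstr : b.constr K (fun i ↦ c₀ i + χ (S.mkQ (b i))) = b.constr K c₀ + χ ∘ₗ S.mkQ :=
    b.ext fun i ↦ by simp [Module.Basis.constr_basis]
  have hmem : (fun i ↦ c₀ i + χ (S.mkQ (b i))) ∈ Z n := hZ fun i hi ↦ by
    have hbi : S.mkQ (b i) = 0 :=
      (Submodule.Quotient.mk_eq_zero S).2 (Submodule.subset_span ⟨i, hi, rfl⟩)
    simp [hbi]
  obtain ⟨l, hl⟩ := hmem e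
  rw [hconstr, LinearMap.add_apply, LinearMap.comp_apply, hχ, add_sub_cancel] at hl
  exact one_ne_zero hl

end LinearAlgebra

section MixedDifferences
open Function

/-- An increasing enumeration of the vertices `Fin M` adapted to the edge `p`: the `j`-th vertex of
`p` goes to `(M + 1) * (q j + 1)`, and the other vertices to positions between these which depend on
the upper bound `k` of `q` but not on `q`. Thus changing `q j` below `k j` moves the vertex `p j`
only. -/
noncomputable def spread {r M : ℕ} (p : Fin r → Fin M) (k q : Fin r → ℕ) : Fin M → ℕ :=
  extend p (fun j ↦ (M + 1) * (q j + 1))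
    fun m ↦ (M + 1) * ({j | p j < m} : Finset (Fin r)).sup (fun j ↦ k j + 1) + (m + 1)

variable {r M : ℕ} {p₀ : Fin r → Fin M} {k q : Fin r → ℕ}

theorem spread_apply (hp : Injective p₀) (j : Fin r) : spread p₀ k q (p₀ j) = (M + 1) * (q j + 1) :=
  hp.extend_apply _ _ j

theorem spread_update_of_ne (hp : Injective p₀) {m : Fin M} {s : Fin r} (hm : m ≠ p₀ s) (a : ℕ) :
    spread p₀ k (update q s a) m = spread p₀ k q m := by
  by_cases hrange : ∃ j, p₀ j = m
  · obtain ⟨j, rfl⟩ := hrange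
    rw [spread_apply hp, spread_apply hp, update_of_ne (ne_of_apply_ne p₀ hm)]
  · simp only [spread, extend_apply' _ _ _ hrange]

theorem spread_strictMono (hp : StrictMono p₀) (hqk : q ≤ k) (hkq : ∀ i j, i < j → k i < q j) :
    StrictMono (spread p₀ k q) := by
  intro m m' hmm'
  have hm : (m : ℕ) < m' := hmm'
  by_cases hi : ∃ i, p₀ i = m <;> by_cases hj : ∃ j, p₀ j = m'
  · obtain ⟨i, rfl⟩ := hi
    obtain ⟨j, rfl⟩ := hj
    have : q i < q j := (hqk i).trans_lt (hkq i j (hp.lt_iff_lt.1 hmm'))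
    rw [spread_apply hp.injective, spread_apply hp.injective]
    gcongr
  · obtain ⟨i, rfl⟩ := hi
    have : q i + 1 ≤ ({j | p₀ j < m'} : Finset (Fin r)).sup (fun j ↦ k j + 1) :=
      (Nat.succ_le_succ (hqk i)).trans
        (Finset.le_sup (f := fun j ↦ k j + 1) (by simpa using hmm'))
    rw [spread_apply hp.injective, spread, extend_apply' _ _ _ hj]
    exact (Nat.mul_le_mul_left _ this).trans_lt (Nat.lt_add_of_pos_right m'.val.succ_pos)
  · obtain ⟨j, rfl⟩ := hj
    have hsup : ({i | p₀ i < m} : Finset (Fin r)).sup (fun i ↦ k i + 1) ≤ q j :=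
      Finset.sup_le fun i hi ↦ hkq i j
        (hp.lt_iff_lt.1 (((Finset.mem_filter_univ i).1 hi).trans hmm'))
    rw [spread_apply hp.injective, spread, extend_apply' _ _ _ hi, mul_add_one]
    exact Nat.add_lt_add_of_le_of_lt (Nat.mul_le_mul_left _ hsup) (by lia)
  · have hsub : ({i | p₀ i < m} : Finset (Fin r)) ⊆ ({i | p₀ i < m'} : Finset (Fin r)) :=
      Finset.monotone_filter_right _ fun i _ hi ↦ hi.trans hmm'
    simp only [spread, extend_apply' _ _ _ hi, extend_apply' _ _ _ hj]
    exact Nat.add_lt_add_of_le_of_lt (Nat.mul_le_mul_left _ (Finset.sup_mono hsub)) (by lia)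

/-- On increasing tuples, all mixed second differences of `u` in two distinct coordinates `s`, `t`
vanish. The base point `h` is the lower corner, so that coordinates are only ever raised, and the
equation is written without subtraction. -/
def MixedDifferencesVanish {W : Type*} [Add W] (u : (Fin r → ℕ) → W) : Prop :=
  ∀ ⦃h : Fin r → ℕ⦄ ⦃s t : Fin r⦄ ⦃a b : ℕ⦄, s ≠ t → h s ≤ a → h t ≤ b →
    StrictMono (update h s a) → StrictMono (update h t b) →
    u (update (update h s a) t b) + u h = u (update h s a) + u (update h t b)

theorem update_update_lt_of_lt {h : Fin r → ℕ} {s t : Fin r} {a b : ℕ} (hst : s ≠ t)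
    (hsa : StrictMono (update h s a)) (htb : StrictMono (update h t b)) {i j : Fin r}
    (hij : i < j) : update (update h s a) t b i < h j := by
  have h1 := hsa hij
  have h2 := htb hij
  simp only [update_apply] at h1 h2 ⊢
  split_ifs at h1 h2 ⊢ <;> grind

variable {K W T : Type*} [Field K] [AddCommGroup W] [Module K W] {p : T → Fin r → Fin M}

-- `p l` cannot meet both of the vertices `p l₀ s` and `p l₀ t` that are moved.
theorem IsLinearHypergraph.mixedDifference_spread_eq (hp : IsLinearHypergraph p) {l l₀ : T}
    (hl : l ≠ l₀) {s t : Fin r} (hst : s ≠ t) (u : (Fin r → ℕ) → W) (k q : Fin r → ℕ) (a b : ℕ) :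
    u (spread (p l₀) k (update (update q s a) t b) ∘ p l) + u (spread (p l₀) k q ∘ p l) =
      u (spread (p l₀) k (update q s a) ∘ p l) + u (spread (p l₀) k (update q t b) ∘ p l) := by
  have hfix {s : Fin r} (hmiss : ∀ i, p l i ≠ p l₀ s) (q : Fin r → ℕ) (a : ℕ) :
      spread (p l₀) k (update q s a) ∘ p l = spread (p l₀) k q ∘ p l :=
    funext fun i ↦ spread_update_of_ne (hp.strictMono l₀).injective (hmiss i) a
  by_cases hmeet : ∃ i, p l i = p l₀ s
  · obtain ⟨i, hi⟩ := hmeet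
    have hmiss (i' : Fin r) : p l i' ≠ p l₀ t := fun hi' ↦ hl (hp.eq_of_two_common hst hi hi')
    simp only [hfix hmiss]
  · push Not at hmeet
    simp only [update_comm hst, hfix hmeet, add_comm]

theorem mixedDifferencesVanish_of_relation [Fintype T] (hp : IsLinearHypergraph p)
    {u : (Fin r → ℕ) → W} {c : T → K} {l₀ : T} (hc : c l₀ ≠ 0)
    (hrel : ∀ e : Fin M → ℕ, StrictMono e → ∑ l, c l • u (e ∘ p l) = 0) :
    MixedDifferencesVanish fun h ↦ u fun j ↦ (M + 1) * (h j + 1) := by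
  intro h s t a b hst hs ht hsa htb
  let k := update (update h s a) t b
  let E (q : Fin r → ℕ) : Fin M → ℕ := spread (p l₀) k q
  have hrelE {q : Fin r → ℕ} (hhq : h ≤ q) (hqk : q ≤ k) : ∑ l, c l • u (E q ∘ p l) = 0 :=
    hrel _ (spread_strictMono (hp.strictMono l₀) hqk fun i j hij ↦
      (update_update_lt_of_lt hst hsa htb hij).trans_le (hhq j))
  have hh_le_s : h ≤ update h s a := le_update_self_iff.2 hs
  have hh_le_t : h ≤ update h t b := le_update_self_iff.2 ht
  have hs_le_k : update h s a ≤ k := le_update_self_iff.2 (by rwa [update_of_ne hst.symm])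
  have ht_le_k : update h t b ≤ k := by
    simp only [k, update_comm hst]
    exact le_update_self_iff.2 (by rwa [update_of_ne hst])
  let D (l : T) : W := u (E k ∘ p l) + u (E h ∘ p l) -
    (u (E (update h s a) ∘ p l) + u (E (update h t b) ∘ p l))
  have hD_sum : ∑ l, c l • D l = 0 := by
    simp only [D, smul_sub, smul_add, Finset.sum_sub_distrib, Finset.sum_add_distrib,
      hrelE (hh_le_s.trans hs_le_k) le_rfl, hrelE le_rfl (hh_le_s.trans hs_le_k),
      hrelE hh_le_s hs_le_k, hrelE hh_le_t ht_le_k, add_zero, sub_zero]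
  have hD_ne (l : T) (hl : l ≠ l₀) : D l = 0 :=
    sub_eq_zero.2 (hp.mixedDifference_spread_eq hl hst u k h a b)
  rw [Fintype.sum_eq_single l₀ fun l hl ↦ by rw [hD_ne l hl, smul_zero]] at hD_sum
  have hE_edge (q : Fin r → ℕ) : E q ∘ p l₀ = fun j ↦ (M + 1) * (q j + 1) :=
    funext fun j ↦ spread_apply (hp.strictMono l₀).injective j
  simpa only [D, hE_edge, sub_eq_zero] using (smul_eq_zero_iff_right hc).1 hD_sum

theorem exists_strictMono_mixedDifferencesVanish [Finite K] [Finite T]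
    (hp : IsLinearHypergraph p) {u : (Fin r → ℕ) → W}
    (hdep : ∀ e : Fin M → ℕ, StrictMono e → ¬ LinearIndependent K fun l ↦ u (e ∘ p l)) :
    ∃ ρ : ℕ → ℕ, StrictMono ρ ∧ MixedDifferencesVanish fun h ↦ u (ρ ∘ h) := by
  cases nonempty_fintype T
  have hcoeff (e : Fin M → ℕ) : ∃ c : T → K, StrictMono e →
      ∑ l, c l • u (e ∘ p l) = 0 ∧ ∃ l, c l ≠ 0 := by
    by_cases he : StrictMono e
    · obtain ⟨c, hc⟩ := Fintype.not_linearIndependent_iff.1 (hdep e he)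
      exact ⟨c, fun _ ↦ hc⟩
    · exact ⟨0, fun h ↦ absurd h he⟩
  choose coeff hcoeff using hcoeff
  obtain ⟨σ, hσ, c, hc⟩ := infinite_ramsey M coeff
  have hrel {e : Fin M → ℕ} (he : StrictMono e) :
      ∑ l, c l • u (σ ∘ e ∘ p l) = 0 ∧ ∃ l, c l ≠ 0 :=
    hc e he ▸ hcoeff (σ ∘ e) (hσ.comp he)
  obtain ⟨l₀, hl₀⟩ := (hrel Fin.val_strictMono).2
  refine ⟨fun a ↦ σ ((M + 1) * (a + 1)), fun a b hab ↦ hσ (by gcongr), ?_⟩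
  exact mixedDifferencesVanish_of_relation hp (u := fun h ↦ u (σ ∘ h)) hl₀ fun e he ↦ (hrel he).1

theorem strictMono_quadruple {a b c d : ℕ} (hab : a < b) (hbc : b < c) (hcd : c < d) :
    StrictMono ![a, b, c, d] := by
  simp [Fin.strictMono_iff_lt_succ, Fin.forall_fin_succ, hab, hbc, hcd]

theorem update_quadruple {α : Type*} (a b c d x : α) :
    update ![a, b, c, d] 0 x = ![x, b, c, d] ∧ update ![a, b, c, d] 1 x = ![a, x, c, d] ∧
      update ![a, b, c, d] 2 x = ![a, b, x, d] ∧ update ![a, b, c, d] 3 x = ![a, b, c, x] := by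
  refine ⟨?_, ?_, ?_, ?_⟩ <;> ext i <;> fin_cases i <;> rfl

theorem MixedDifferencesVanish.last_difference_eq {u : (Fin 4 → ℕ) → W}
    (hu : MixedDifferencesVanish u) {a b c d d' : ℕ} (hab : a < b) (hbc : b < c) (hcd : c < d)
    (hdd' : d ≤ d') : u ![a, b, c, d'] - u ![a, b, c, d] = u ![0, 1, 2, d'] - u ![0, 1, 2, d] := by
  have lower_first : u ![a, b, c, d'] + u ![0, b, c, d] = u ![a, b, c, d] + u ![0, b, c, d'] := by
    have := @hu ![0, b, c, d] 0 3 a d' (by decide) (Nat.zero_le _) hdd'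
    simp only [update_quadruple] at this
    exact this (strictMono_quadruple hab hbc hcd)
      (strictMono_quadruple (by lia) hbc (by lia))
  have lower_second : u ![0, b, c, d'] + u ![0, 1, c, d] = u ![0, b, c, d] + u ![0, 1, c, d'] := by
    have := @hu ![0, 1, c, d] 1 3 b d' (by decide) (show 1 ≤ b by lia) hdd'
    simp only [update_quadruple] at this
    exact this (strictMono_quadruple (by lia) hbc hcd)
      (strictMono_quadruple one_pos (by lia) (by lia))
  have lower_third : u ![0, 1, c, d'] + u ![0, 1, 2, d] = u ![0, 1, c, d] + u ![0, 1, 2, d'] := by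
    have := @hu ![0, 1, 2, d] 2 3 c d' (by decide) (show 2 ≤ c by lia) hdd'
    simp only [update_quadruple] at this
    exact this (strictMono_quadruple one_pos (by lia) hcd)
      (strictMono_quadruple one_pos one_lt_two (by lia))
  grind

theorem MixedDifferencesVanish.alternating_sum_eq {u : (Fin 4 → ℕ) → W}
    (hu : MixedDifferencesVanish u) {x y y' z z' w w' : ℕ} (hxy : x < y) (hy : y ≤ y')
    (hyz : y' < z) (hz : z ≤ z') (hzw : z' < w) (hw : w ≤ w') :
    u ![x, y, z, w] - u ![x, y, z', w'] - u ![x, y', z, w'] + u ![x, y', z', w] =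
      (2 : ℤ) • (u ![x, y, z, w] - u ![x, y, z, w']) := by
  have hdiff_yz := @hu ![x, y, z, w] 1 2 y' z' (by decide) hy hz
  have hdiff_yw := @hu ![x, y, z, w] 1 3 y' w' (by decide) hy hw
  have hdiff_zw := @hu ![x, y, z, w] 2 3 z' w' (by decide) hz hw
  simp only [update_quadruple] at hdiff_yz hdiff_yw hdiff_zw
  have hmono_y' : StrictMono ![x, y', z, w] := strictMono_quadruple (by lia) hyz (by lia)
  have hmono_z' : StrictMono ![x, y, z', w] := strictMono_quadruple hxy (by lia) hzw
  have hmono_w' : StrictMono ![x, y, z, w'] := strictMono_quadruple hxy (by lia) (by lia)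
  specialize hdiff_yz hmono_y' hmono_z'
  specialize hdiff_yw hmono_y' hmono_w'
  specialize hdiff_zw hmono_z' hmono_w'
  grind

end MixedDifferences

section Paired

/-- The four entries of `q` split into two pairs of equal entries, so that in a Boolean group they
sum to zero. -/
def IsPaired {C : Type*} (q : Fin 4 → C) : Prop :=
  (q 0 = q 1 ∧ q 2 = q 3) ∨ (q 0 = q 2 ∧ q 1 = q 3) ∨ (q 0 = q 3 ∧ q 1 = q 2)

theorem IsPaired.map {C D : Type*} {q : Fin 4 → C} (hq : IsPaired q) (f : C → D) :
    IsPaired (f ∘ q) := by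
  unfold IsPaired at *
  grind

theorem IsPaired.sum_eq_zero {A : Type*} [AddCommGroup A] {x : Fin 4 → A} (hx : IsPaired x)
    (htwo : ∀ i, 2 • x i = 0) : ∑ i, x i = 0 := by
  simp only [two_nsmul] at htwo
  rw [Fin.sum_univ_four]
  have h0 := htwo 0
  have h1 := htwo 1
  have h2 := htwo 2
  rcases hx with ⟨h, h'⟩ | ⟨h, h'⟩ | ⟨h, h'⟩ <;> rw [← h, ← h'] <;> grind

variable {K W : Type*} [Field K] [AddCommGroup W] [Module K W] {u : (Fin 4 → ℕ) → W}

variable (K) in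
/-- Every linear functional kills `u` on the increasing quadruples that are paired under some finite
colouring of `ℕ`. For `u h = f (v (h 0) + v (h 1) + v (h 2) + v (h 3)) - f 0` with `f` a map on a
Boolean group, this is what is needed of the Bohr continuity of `f` at `0`. -/
def PairedNull (u : (Fin 4 → ℕ) → W) : Prop :=
  ∀ χ : Module.Dual K W, ∃ (n : ℕ) (P : ℕ → Fin n),
    ∀ h, StrictMono h → IsPaired (P ∘ h) → χ (u h) = 0

theorem PairedNull.map {W' : Type*} [AddCommGroup W'] [Module K W'] (hu : PairedNull K u)
    (f : W →ₗ[K] W') : PairedNull K (f ∘ u) := fun χ ↦ hu (χ ∘ₗ f)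

theorem PairedNull.comp_strictMono (hu : PairedNull K u) {ρ : ℕ → ℕ} (hρ : StrictMono ρ) :
    PairedNull K fun h ↦ u (ρ ∘ h) := fun χ ↦ by
  obtain ⟨n, P, hP⟩ := hu χ
  exact ⟨n, P ∘ ρ, fun h hh ↦ hP (ρ ∘ h) (hρ.comp hh)⟩

theorem exists_frequently_coloring_eq {C : Type*} [Finite C] (P : ℕ → C) {A : ℕ → Prop}
    (hA : ∃ᶠ d in Filter.atTop, A d) : ∃ c, ∃ᶠ d in Filter.atTop, A d ∧ P d = c := by
  rw [← Filter.frequently_exists]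
  exact hA.mono fun d hd ↦ ⟨P d, hd, rfl⟩

theorem exists_dual_frequently_eq_zero_and_eq_one [Finite K] {w : ℕ → W}
    (hw : (Set.range w).Infinite) : ∃ χ : Module.Dual K W,
      (∃ᶠ d in Filter.atTop, χ (w d) = 0) ∧ ∃ᶠ d in Filter.atTop, χ (w d) = 1 := by
  obtain ⟨d, hd⟩ := exists_linearIndependent_comp_of_infinite_range (K := K) hw
  have hdinj : Function.Injective d := hd.injective.of_comp
  obtain ⟨χ, hχ⟩ := exists_dual_apply_eq hd fun i ↦ if Even i then 0 else 1
  simp only [Function.comp_apply] at hχ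
  refine ⟨χ, ?_, ?_⟩
  · refine Nat.frequently_atTop_iff_infinite.2 <| (Set.infinite_range_of_injective
      (hdinj.comp (mul_right_injective₀ two_ne_zero))).mono ?_
    rintro _ ⟨i, rfl⟩
    simp [hχ]
  · refine Nat.frequently_atTop_iff_infinite.2 <| (Set.infinite_range_of_injective
      (hdinj.comp ((add_left_injective 1).comp (mul_right_injective₀ two_ne_zero)))).mono ?_
    rintro _ ⟨i, rfl⟩
    simp [hχ]

theorem PairedNull.finite_range_last [Finite K] (hK : (2 : K) ≠ 0) (hu : PairedNull K u)
    (hmixed : MixedDifferencesVanish u) : (Set.range fun d ↦ u ![0, 1, 2, d]).Finite := by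
  by_contra hinf
  obtain ⟨χ, hzero, hone⟩ := exists_dual_frequently_eq_zero_and_eq_one (K := K) hinf
  obtain ⟨n, P, hP⟩ := hu χ
  obtain ⟨c₀, hc₀⟩ := exists_frequently_coloring_eq P hzero
  obtain ⟨c₁, hc₁⟩ := exists_frequently_coloring_eq P hone
  rw [Filter.frequently_atTop'] at hc₀ hc₁
  obtain ⟨x, -, -, hx⟩ := hc₀ 0
  obtain ⟨y, hxy, -, hy⟩ := hc₀ x
  obtain ⟨y', hyy', -, hy'⟩ := hc₁ y
  obtain ⟨z, hyz, -, hz⟩ := hc₀ y'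
  obtain ⟨z', hzz', -, hz'⟩ := hc₁ z
  obtain ⟨w, hzw, hzero_w, hw⟩ := hc₀ z'
  obtain ⟨w', hww', hone_w', hw'⟩ := hc₁ w
  have hnull {a b c d : ℕ} (hab : a < b) (hbc : b < c) (hcd : c < d)
      (hpaired : IsPaired ![P a, P b, P c, P d]) : χ (u ![a, b, c, d]) = 0 :=
    hP _ (strictMono_quadruple hab hbc hcd) (by simpa [IsPaired] using hpaired)
  have h0000 : χ (u ![x, y, z, w]) = 0 :=
    hnull hxy (by lia) (by lia) (by simp [IsPaired, *])
  have h0011 : χ (u ![x, y, z', w']) = 0 :=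
    hnull hxy (by lia) (by lia) (by simp [IsPaired, *])
  have h0101 : χ (u ![x, y', z, w']) = 0 :=
    hnull (by lia) hyz (by lia) (by simp [IsPaired, *])
  have h0110 : χ (u ![x, y', z', w]) = 0 :=
    hnull (by lia) (by lia) hzw (by simp [IsPaired, *])
  have hlast : χ (u ![x, y, z, w]) - χ (u ![x, y, z, w']) = -1 := by
    rw [← map_sub, ← neg_sub, hmixed.last_difference_eq hxy (by lia) (by lia) hww'.le, map_neg,
      map_sub, hzero_w, hone_w', sub_zero]
  have halt := congrArg χ (hmixed.alternating_sum_eq hxy hyy'.le hyz hzz'.le hzw hww'.le)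
  simp only [map_add, map_sub, map_zsmul, h0000, h0011, h0101, h0110] at halt hlast
  rw [hlast] at halt
  apply hK
  simpa using halt

theorem PairedNull.exists_not_linearIndependent [Finite K] (hu : PairedNull K u) :
    ∃ (S : Submodule K W) (M : ℕ) (T : Type) (_ : Finite T) (p : T → Fin 4 → Fin M),
      FiniteDimensional K S ∧ IsLinearHypergraph p ∧ ∀ e : Fin M → ℕ, StrictMono e →
        ¬ LinearIndependent K fun l ↦ S.mkQ (u (e ∘ p l)) := by
  choose M T hT p hp hcolor using exists_isLinearHypergraph_forall_coloring 4
  obtain ⟨n, S, hS, hdep⟩ := exists_finiteDimensional_forall_not_linearIndependent (K := K)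
    (fun n (e : {e : Fin (M n) → ℕ // StrictMono e}) l ↦ u (e.1 ∘ p n l)) fun χ ↦ by
      obtain ⟨n, P, hP⟩ := hu χ
      refine ⟨n, fun e ↦ ?_⟩
      obtain ⟨l, c, hl⟩ := hcolor n (P ∘ e.1)
      exact ⟨l, hP _ (e.2.comp ((hp n).strictMono l))
        (.inl ⟨(hl 0).trans (hl 1).symm, (hl 2).trans (hl 3).symm⟩)⟩
  exact ⟨S, M n, T n, hT n, p n, hS, hp n, fun e he ↦ hdep ⟨e, he⟩⟩

theorem PairedNull.exists_infinite_fiber [Finite K] (hK : (2 : K) ≠ 0) (hu : PairedNull K u) :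
    ∃ x, {h | StrictMono h ∧ u h = x}.Infinite := by
  by_contra! hfib
  obtain ⟨S, M, T, _, p, _, hp, hdep⟩ := hu.exists_not_linearIndependent
  obtain ⟨ρ, hρ, hmixed⟩ := exists_strictMono_mixedDifferencesVanish hp (u := S.mkQ ∘ u) hdep
  let tuple (d : ℕ) : Fin 4 → ℕ := ρ ∘ ![0, 1, 2, d]
  have htuple {d : ℕ} (hd : 2 < d) : StrictMono (tuple d) :=
    hρ.comp (strictMono_quadruple one_pos one_lt_two hd)
  have hinj : Function.Injective tuple := fun d d' h ↦ hρ.injective (congrFun h 3)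
  have hfinite : (S.mkQ ⁻¹' Set.range fun d ↦ S.mkQ (u (tuple d))).Finite :=
    finite_preimage_mkQ S (((hu.map S.mkQ).comp_strictMono hρ).finite_range_last hK hmixed)
  refine Set.Ioi_infinite 2 (.of_finite_image ?_ hinj.injOn)
  refine (hfinite.biUnion fun x _ ↦ hfib x).subset ?_
  rintro _ ⟨d, hd, rfl⟩
  exact Set.mem_biUnion (x := u (tuple d)) ⟨d, rfl⟩ ⟨htuple hd, rfl⟩

end Paired

section Bohr

theorem continuous_bohrTopology {G : Type*} [AddCommGroup G] (χ : G →+ AddCircle (1 : ℝ)) :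
    @Continuous _ _ (bohrTopology G) _ χ :=
  continuous_iff_le_induced.2 (iInf_le _ χ)

theorem exists_finite_characters_subset {G : Type*} [AddCommGroup G] {O : Set G}
    (hO : O ∈ @nhds G (bohrTopology G) 0) : ∃ F : Set (G →+ AddCircle (1 : ℝ)), F.Finite ∧
      ∀ x, (∀ ψ ∈ F, ψ x = 0) → x ∈ O := by
  rw [bohrTopology, nhds_iInf, Filter.mem_iInf] at hO
  obtain ⟨F, hF, V, hV, rfl⟩ := hO
  refine ⟨F, hF, fun x hx ↦ Set.mem_iInter.2 fun ψ ↦ ?_⟩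
  obtain ⟨t, ht, htV⟩ := (nhds_induced (T := inferInstance) ψ.1 0 ▸ hV ψ :)
  exact htV (by simpa only [Set.mem_preimage, hx ψ ψ.2, map_zero] using mem_of_mem_nhds ht)

theorem isOpen_bohrTopology_preimage_singleton {G : Type*} [AddCommGroup G] {n : ℕ} [NeZero n]
    (χ : G →+ ZMod n) (z : ZMod n) : @IsOpen G (bohrTopology G) (χ ⁻¹' {z}) := by
  let _ := bohrTopology G
  have hopen : IsOpen (ZMod.toAddCircle '' ({z}ᶜ : Set (ZMod n)))ᶜ :=
    (Set.toFinite _).isClosed.isOpen_compl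
  convert hopen.preimage (continuous_bohrTopology (ZMod.toAddCircle.comp χ)) using 1
  ext x
  simp [(ZMod.toAddCircle_injective n).eq_iff]

variable {V W : Type*} [AddCommGroup V] [AddCommGroup W] [Module (ZMod 2) V] {p : ℕ} [Fact p.Prime]
  [Module (ZMod p) W]

theorem exists_coloring_forall_isPaired_sum_mem (v : ℕ → V) {O : Set V}
    (hO : O ∈ @nhds V (bohrTopology V) 0) :
    ∃ (n : ℕ) (P : ℕ → Fin n), ∀ h : Fin 4 → ℕ, IsPaired (P ∘ h) → ∑ i, v (h i) ∈ O := by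
  obtain ⟨F, hF, hFO⟩ := exists_finite_characters_subset hO
  have htwo (ψ : V →+ AddCircle (1 : ℝ)) (x : V) : 2 • ψ x = 0 := by
    rw [← map_nsmul, ← Nat.cast_smul_eq_nsmul (ZMod 2), Nat.cast_ofNat,
      show (2 : ZMod 2) = 0 from rfl, zero_smul, map_zero]
  let Torsion := {z : AddCircle (1 : ℝ) // 2 • z = 0}
  have : Finite Torsion := AddCircle.finite_torsion (1 : ℝ) two_pos
  have : Finite F := hF
  let color (a : ℕ) (ψ : F) : Torsion := ⟨ψ.1 (v a), htwo _ _⟩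
  refine ⟨_, Finite.equivFin (F → Torsion) ∘ color, fun h hh ↦ hFO _ fun ψ hψ ↦ ?_⟩
  have hpaired : IsPaired fun i ↦ ψ (v (h i)) := by
    simpa [color, Function.comp_def] using
      hh.map fun k ↦ ((Finite.equivFin (F → Torsion)).symm k ⟨ψ, hψ⟩).1
  rw [map_sum]
  exact hpaired.sum_eq_zero fun i ↦ htwo _ _

theorem pairedNull_of_continuous (v : ℕ → V) {f : V → W}
    (hf : @Continuous _ _ (bohrTopology V) (bohrTopology W) f) :
    PairedNull (ZMod p) fun h ↦ f (∑ i, v (h i)) - f 0 := by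
  intro χ
  let _ := bohrTopology V
  let _ := bohrTopology W
  have hopen : IsOpen (f ⁻¹' (χ ⁻¹' {χ (f 0)})) :=
    (isOpen_bohrTopology_preimage_singleton χ.toAddMonoidHom _).preimage hf
  obtain ⟨n, P, hP⟩ := exists_coloring_forall_isPaired_sum_mem v (hopen.mem_nhds rfl)
  refine ⟨n, P, fun h _ hh ↦ ?_⟩
  have hχ : χ (f (∑ i, v (h i))) = χ (f 0) := hP h hh
  rw [map_sub, hχ, sub_self]

theorem bohr_boolean_vs_Z3_not_homeomorphic_general [Infinite V] (hp : p ≠ 2) {f : V → W}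
    (hf : @Continuous _ _ (bohrTopology V) (bohrTopology W) f) : ∃ y, (f ⁻¹' {y}).Infinite := by
  obtain ⟨v, hv⟩ := exists_linearIndependent_comp_of_infinite_range (K := ZMod 2) (w := @id V)
    (by simpa using Set.infinite_univ)
  have hp2 : (2 : ZMod p) ≠ 0 := Ring.two_ne_zero (by rwa [ZMod.ringChar_zmod_n])
  obtain ⟨x, hx⟩ := (pairedNull_of_continuous v hf).exists_infinite_fiber hp2
  refine ⟨x + f 0, (hx.image ((injOn_sum_of_linearIndependent hv 4).mono fun h hh ↦ hh.1)).mono ?_⟩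
  rintro _ ⟨h, ⟨-, rfl⟩, rfl⟩
  simp

end Bohr

/-- For every `κ > 2^(2^𝔠)`, the spaces `B_κ^#` and `(⊕_κ ℤ/3ℤ)^#` are not homeomorphic. -/
theorem bohr_boolean_vs_Z3_not_homeomorphic (κ : Type*)
    (hκ : (2 : Cardinal) ^ ((2 : Cardinal) ^ Cardinal.continuum) < Cardinal.mk κ) :
    letI := bohrTopology (κ →₀ ZMod 2)
    letI := bohrTopology (κ →₀ ZMod 3)
    IsEmpty ((κ →₀ ZMod 2) ≃ₜ (κ →₀ ZMod 3)) := by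
  have : Infinite κ := Cardinal.infinite_iff.2 <| Cardinal.aleph0_le_continuum.trans <|
    (Cardinal.cantor _).le.trans <| (Cardinal.cantor _).le.trans hκ.le
  let _ := bohrTopology (κ →₀ ZMod 2)
  let _ := bohrTopology (κ →₀ ZMod 3)
  refine ⟨fun Φ ↦ ?_⟩
  obtain ⟨y, hy⟩ := bohr_boolean_vs_Z3_not_homeomorphic_general (p := 3) (by decide) Φ.continuous
  exact hy (Set.subsingleton_singleton.preimage Φ.injective).finite
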